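/- arXiv:2509.14585 — 4 statements merged into one kernel-verified Lean document; each statement's English description precedes it below -/
import Mathlib

section
/- The linear span of the set of anisotropic Gaussian functions { s ↦ exp(-(s - m)ᵀ C^{-1} (s - m)) : m ∈ ℝ^D, C a D × D real symmetric positive definite matrix } is dense in L²(ℝ^D) with respect to Lebesgue measure. -/
open MeasureTheory Matrix

/-- The anisotropic Gaussian function `s ↦ exp (-(s - m)ᵀ C⁻¹ (s - m))` on `ℝ^D`. -/
noncomputable def anisotropicGaussian (D : ℕ) (m : Fin D → ℝ)
    (C : Matrix (Fin D) (Fin D) ℝ) : (Fin D → ℝ) → ℝ :=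
  fun s => Real.exp (-((s - m) ⬝ᵥ (C⁻¹ *ᵥ (s - m))))

/-- The set of elements of `L²(ℝ^D)` (w.r.t. Lebesgue measure) represented (a.e.) by an
anisotropic Gaussian `s ↦ exp (-(s - m)ᵀ C⁻¹ (s - m))` with `m ∈ ℝ^D` and `C` a `D × D` real
symmetric positive definite matrix. -/
noncomputable def gaussianSetL2 (D : ℕ) : Set (Lp ℝ 2 (volume : Measure (Fin D → ℝ))) :=
  {f | ∃ (m : Fin D → ℝ) (C : Matrix (Fin D) (Fin D) ℝ),
    C.IsSymm ∧ C.PosDef ∧ (f : (Fin D → ℝ) → ℝ) =ᵐ[volume] anisotropicGaussian D m C}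

open ProbabilityTheory in
lemma measure_ext_of_laplace {D : ℕ} (μ ν : Measure (Fin D → ℝ)) [IsFiniteMeasure μ]
    [IsFiniteMeasure ν]
    (hμ : ∀ L : StrongDual ℝ (Fin D → ℝ), Integrable (fun x => Real.exp (L x)) μ)
    (h : ∀ L : StrongDual ℝ (Fin D → ℝ),
      ∫ x, Real.exp (L x) ∂μ = ∫ x, Real.exp (L x) ∂ν) : μ = ν := by
  apply Measure.ext_of_charFunDual
  funext L
  have hm : mgf L μ = mgf L ν := by
    funext t
    simpa [mgf] using h (t • L)
  have h0 : μ.real Set.univ = ν.real Set.univ := by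
    simpa using h 0
  have hz : μ = 0 ↔ ν = 0 := by
    rw [← Measure.measure_univ_eq_zero, ← Measure.measure_univ_eq_zero,
      ← measureReal_eq_zero_iff, ← measureReal_eq_zero_iff, h0]
  have hset : integrableExpSet L μ = Set.univ := by
    ext t
    simpa [integrableExpSet] using hμ (t • L)
  have := eqOn_complexMGF_of_mgf' hm hz (x := (1 : ℝ) * Complex.I) (by simp [hset])
  rw [complexMGF_mul_I (by fun_prop), complexMGF_mul_I (by fun_prop)] at this
  rw [charFunDual_eq_charFun_map_one, charFunDual_eq_charFun_map_one, this]

lemma ae_zero_of_laplace {D : ℕ} (g : (Fin D → ℝ) → ℝ)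
    (hi : ∀ L : StrongDual ℝ (Fin D → ℝ), Integrable (fun x => g x * Real.exp (L x)))
    (h : ∀ L : StrongDual ℝ (Fin D → ℝ), ∫ x, g x * Real.exp (L x) = 0) :
    g =ᵐ[volume] 0 := by
  have hg : Integrable g := by simpa using hi 0
  have hgm : AEMeasurable g := hg.aemeasurable
  have hp : ∀ L : StrongDual ℝ (Fin D → ℝ),
      Integrable (fun x => max (g x) 0 * Real.exp (L x)) := fun L => by
    refine (hi L).pos_part.congr (ae_of_all _ fun x => ?_)
    simp only
    rw [max_mul_of_nonneg _ _ (Real.exp_pos _).le, zero_mul]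
  have hn : ∀ L : StrongDual ℝ (Fin D → ℝ),
      Integrable (fun x => max (-g x) 0 * Real.exp (L x)) := fun L => by
    refine (hi L).neg_part.congr (ae_of_all _ fun x => ?_)
    simp only
    rw [max_mul_of_nonneg _ _ (Real.exp_pos _).le, zero_mul, neg_mul]
  have f1 : IsFiniteMeasure (volume.withDensity fun x => ENNReal.ofReal (g x)) :=
    isFiniteMeasure_withDensity_ofReal hg.2
  have f2 : IsFiniteMeasure (volume.withDensity fun x => ENNReal.ofReal (-g x)) :=
    isFiniteMeasure_withDensity_ofReal hg.neg.2
  have key : (volume.withDensity fun x => ENNReal.ofReal (g x)) =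
      volume.withDensity fun x => ENNReal.ofReal (-g x) := by
    apply measure_ext_of_laplace
    · intro L
      rw [integrable_withDensity_iff_integrable_smul₀' (by fun_prop) (by simp)]
      refine (hp L).congr (ae_of_all _ fun x => ?_)
      simp [ENNReal.toReal_ofReal']
    · intro L
      rw [integral_withDensity_eq_integral_toReal_smul₀ (by fun_prop) (by simp),
        integral_withDensity_eq_integral_toReal_smul₀ (by fun_prop) (by simp)]
      simp only [ENNReal.toReal_ofReal', smul_eq_mul]
      rw [← sub_eq_zero, ← integral_sub (hp L) (hn L)]
      refine Eq.trans ?_ (h L)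
      congr with x
      rw [← sub_mul]
      congr 1
      rcases le_total (g x) 0 with h | h <;> simp [h]
  rw [withDensity_eq_iff_of_sigmaFinite (by fun_prop) (by fun_prop)] at key
  filter_upwards [key] with x hx
  rcases lt_trichotomy (g x) 0 with h | h | h
  · rw [ENNReal.ofReal_of_nonpos h.le, eq_comm, ENNReal.ofReal_eq_zero] at hx
    linarith
  · exact h
  · rw [ENNReal.ofReal_of_nonpos (p := -g x) (by linarith), ENNReal.ofReal_eq_zero] at hx
    linarith

lemma aG_one {D : ℕ} (m s : Fin D → ℝ) :
    anisotropicGaussian D m 1 s = ∏ i, Real.exp (-(s i - m i) ^ 2) := by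
  rw [← Real.exp_sum]
  simp [anisotropicGaussian, dotProduct, Finset.sum_neg_distrib, pow_two]

lemma aG_memLp {D : ℕ} (m : Fin D → ℝ) :
    MemLp (anisotropicGaussian D m 1) 2 (volume : Measure (Fin D → ℝ)) := by
  have e : anisotropicGaussian D m 1 = fun s => ∏ i, Real.exp (-(s i - m i) ^ 2) :=
    funext (aG_one m)
  rw [e, memLp_two_iff_integrable_sq (Continuous.aestronglyMeasurable (by fun_prop))]
  simp_rw [← Finset.prod_pow]
  refine Integrable.fintype_prod (f := fun i (t : ℝ) => Real.exp (-(t - m i) ^ 2) ^ 2) fun i => ?_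
  refine ((integrable_exp_neg_mul_sq (b := 2) (by norm_num)).comp_sub_right (m i)).congr
    (ae_of_all _ fun t => ?_)
  simp only
  rw [← Real.exp_nat_mul]
  congr 1
  push_cast
  ring

lemma aG_shift {D : ℕ} (L : StrongDual ℝ (Fin D → ℝ)) : ∃ (m : Fin D → ℝ) (c : ℝ), ∀ s,
    anisotropicGaussian D 0 1 s * Real.exp (L s) = c * anisotropicGaussian D m 1 s := by
  refine ⟨fun i => L (Pi.single i 1) / 2, Real.exp (∑ i, (L (Pi.single i 1) / 2) ^ 2),
    fun s => ?_⟩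
  have hL : L s = ∑ i, s i * L (Pi.single i 1) := by
    conv_lhs => rw [pi_eq_sum_univ' s, map_sum]
    simp
  rw [aG_one, aG_one, ← Real.exp_sum, ← Real.exp_sum, ← Real.exp_add, ← Real.exp_add, hL,
    ← Finset.sum_add_distrib, ← Finset.sum_add_distrib]
  congr 2 with i
  simp only [Pi.zero_apply]
  ring

/-- The linear span of the anisotropic Gaussian functions is dense in `L²(ℝ^D)` with respect
to Lebesgue measure. -/
theorem dense_span_anisotropicGaussian (D : ℕ) (hD : 0 < D) :
    Dense ((Submodule.span ℝ (gaussianSetL2 D) : Submodule ℝ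
      (Lp ℝ 2 (volume : Measure (Fin D → ℝ)))) : Set (Lp ℝ 2 (volume : Measure (Fin D → ℝ)))) := by
  rw [Submodule.dense_iff_topologicalClosure_eq_top, Submodule.topologicalClosure_eq_top_iff,
    Submodule.eq_bot_iff]
  intro f hf
  have hint : ∀ m : Fin D → ℝ, Integrable (fun s => f s * anisotropicGaussian D m 1 s) :=
    fun m => (Lp.memLp f).integrable_mul (aG_memLp m)
  have h0 : ∀ m : Fin D → ℝ, ∫ s, f s * anisotropicGaussian D m 1 s = 0 := by
    intro m
    have hmem : (aG_memLp m).toLp _ ∈ gaussianSetL2 D :=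
      ⟨m, 1, Matrix.isSymm_one, Matrix.PosDef.one, MemLp.coeFn_toLp _⟩
    have := (Submodule.mem_orthogonal _ _).1 hf _ (Submodule.subset_span hmem)
    rw [L2.inner_def] at this
    rw [← this]
    apply integral_congr_ae
    filter_upwards [(aG_memLp m).coeFn_toLp] with s hs
    simp [hs]
  have hz : (fun s => f s * anisotropicGaussian D 0 1 s) =ᵐ[volume] 0 := by
    apply ae_zero_of_laplace
    · intro L
      obtain ⟨m, c, hc⟩ := aG_shift L
      simp_rw [mul_assoc, hc]
      simpa [mul_left_comm] using (hint m).const_mul c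
    · intro L
      obtain ⟨m, c, hc⟩ := aG_shift L
      simp_rw [mul_assoc, hc, mul_left_comm _ c]
      rw [integral_const_mul, h0, mul_zero]
  rw [Lp.eq_zero_iff_ae_eq_zero]
  filter_upwards [hz] with s hs
  exact (mul_eq_zero.1 hs).resolve_right (Real.exp_pos _).ne'
end

section
/- Fix k₀ ∈ {1,…,K} and set G := (2/T) Σ_{t=1}^{T} δ_t · ξ_{k₀}(a_t) · 𝒢_{k₀}(s_t) · (s_t - m_{k₀})(s_t - m_{k₀})ᵀ, which is a D_s × D_s real symmetric matrix. Then for every D_s × D_s real symmetric matrix X, the function C ↦ L(Ω(C)), obtained from the empirical loss L by replacing C_{k₀} with the matrix variable C while keeping all other parameters fixed, has directional derivative at C = C_{k₀} in direction X equal to trace(C_{k₀}^{-1} G C_{k₀}^{-1} X); that is, G is the Riemannian gradient of L with respect to C_{k₀} under the affine-invariant metric ⟨X, Y⟩_C := trace(C^{-1} X C^{-1} Y) on the manifold of symmetric positive definite matrices. -/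
open Matrix Finset

section aux

attribute [local instance] Matrix.linftyOpNormedRing Matrix.linftyOpNormedAlgebra

theorem aux_hasDerivAt_quad {D : ℕ} (A X : Matrix (Fin D) (Fin D) ℝ) (hA : IsUnit A)
    (v : Fin D → ℝ) :
    HasDerivAt (fun τ : ℝ => v ⬝ᵥ ((A + τ • X)⁻¹ *ᵥ v))
      (-(v ⬝ᵥ ((A⁻¹ * X * A⁻¹) *ᵥ v))) 0 := by
  obtain ⟨u, rfl⟩ := hA
  have h1 : HasDerivAt (fun τ : ℝ => (u : Matrix (Fin D) (Fin D) ℝ) + τ • X) X 0 := by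
    exact (((hasDerivAt_id (0 : ℝ)).smul_const X).const_add
      (u : Matrix (Fin D) (Fin D) ℝ)).congr_deriv (one_smul ℝ X)
  have : CompleteSpace (Matrix (Fin D) (Fin D) ℝ) := FiniteDimensional.complete ℝ _
  have h2 := hasFDerivAt_ringInverse (𝕜 := ℝ) u
  have h3 := HasFDerivAt.comp_hasDerivAt_of_eq (0 : ℝ) h2 h1 (by simp)
  let L : Matrix (Fin D) (Fin D) ℝ →ₗ[ℝ] ℝ :=
    { toFun := fun M => v ⬝ᵥ (M *ᵥ v)
      map_add' := fun M N => by simp [Matrix.add_mulVec, dotProduct_add]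
      map_smul' := fun c M => by simp [Matrix.smul_mulVec, dotProduct_smul] }
  have h4 := (LinearMap.toContinuousLinearMap L).hasFDerivAt.comp_hasDerivAt (0 : ℝ) h3
  have e : ((u : Matrix (Fin D) (Fin D) ℝ))⁻¹ = ((u⁻¹ : (Matrix (Fin D) (Fin D) ℝ)ˣ) :
    Matrix (Fin D) (Fin D) ℝ) := by simp
  have hf : (fun τ : ℝ => v ⬝ᵥ (((u : Matrix (Fin D) (Fin D) ℝ) + τ • X)⁻¹ *ᵥ v)) =
      (LinearMap.toContinuousLinearMap L) ∘ Ring.inverse ∘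
        fun τ : ℝ => (u : Matrix (Fin D) (Fin D) ℝ) + τ • X := by
    funext τ
    simp [L, Matrix.nonsing_inv_eq_ringInverse]
  rw [hf]
  refine h4.congr_deriv ?_
  rw [e]
  change v ⬝ᵥ ((-(((u⁻¹ : (Matrix (Fin D) (Fin D) ℝ)ˣ) : Matrix (Fin D) (Fin D) ℝ) * X *
    ((u⁻¹ : (Matrix (Fin D) (Fin D) ℝ)ˣ) : Matrix (Fin D) (Fin D) ℝ))) *ᵥ v) = _
  rw [Matrix.neg_mulVec, dotProduct_neg]

end aux

theorem aux_trace {D : ℕ} (B X : Matrix (Fin D) (Fin D) ℝ) (v : Fin D → ℝ) :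
    (B * vecMulVec v v * B * X).trace = v ⬝ᵥ ((B * X * B) *ᵥ v) := by
  rw [Matrix.mul_assoc, Matrix.mul_assoc, Matrix.trace_mul_comm, Matrix.mul_assoc,
    Matrix.vecMulVec_mul, Matrix.trace_vecMulVec, dotProduct_mulVec, dotProduct_comm]

/-- Riemannian gradient of the empirical loss with respect to the covariance `C_{k₀}` under
the affine-invariant metric: with
`G := (2/T) ∑_t δ_t ξ_{k₀}(a_t) 𝒢_{k₀}(s_t) (s_t - m_{k₀})(s_t - m_{k₀})ᵀ`,
`G` is symmetric and, for every symmetric direction `X`, the map `C ↦ L(Ω(C))` (replacing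
`C_{k₀}` by `C`, all other parameters fixed) has directional derivative at `C = C_{k₀}` in
direction `X` equal to `trace (C_{k₀}⁻¹ G C_{k₀}⁻¹ X) = ⟨G, X⟩_{C_{k₀}}`. -/
theorem riemannianGradient_empiricalLoss_covariance
    (D K J T : ℕ) (hD : 0 < D) (hK : 0 < K) (hJ : 0 < J) (hT : 0 < T)
    (𝔄 : Type) [Fintype 𝔄] [Nonempty 𝔄] [DecidableEq 𝔄]
    (α : ℝ) (hα : 0 ≤ α ∧ α < 1)
    (s : Fin T → Fin D → ℝ) (a : Fin T → 𝔄) (r q : Fin T → ℝ)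
    (υ : Fin K → Fin J → 𝔄 → ℝ) (m : Fin K → Fin D → ℝ)
    (C : Fin K → Matrix (Fin D) (Fin D) ℝ)
    (hC : ∀ k, (C k).IsSymm ∧ (C k).PosDef)
    -- the Gaussian components 𝒢_k, the weights ξ_k and the Bellman residuals δ_t
    (𝒢 : Fin K → (Fin D → ℝ) → ℝ)
    (h𝒢 : ∀ k x, 𝒢 k x = Real.exp (-((x - m k) ⬝ᵥ ((C k)⁻¹ *ᵥ (x - m k)))))
    (ξ : Fin K → 𝔄 → ℝ) (hξ : ∀ k b, ξ k b = ∏ j, υ k j b)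
    (δ : Fin T → ℝ)
    (hδ : ∀ t, δ t = (∑ k, ξ k (a t) * 𝒢 k (s t)) - r t - α * q t)
    (k₀ : Fin K)
    -- the candidate Riemannian gradient G
    (G : Matrix (Fin D) (Fin D) ℝ)
    (hG : G = (2 / (T : ℝ)) • ∑ t,
      (δ t * ξ k₀ (a t) * 𝒢 k₀ (s t)) • vecMulVec (s t - m k₀) (s t - m k₀)) :
    G.IsSymm ∧
    ∀ X : Matrix (Fin D) (Fin D) ℝ, X.IsSymm →
      HasDerivAt
        (fun τ : ℝ => (1 / (T : ℝ)) * ∑ t,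
          ((∑ k, ξ k (a t) *
              (if k = k₀ then
                Real.exp (-((s t - m k₀) ⬝ᵥ ((C k₀ + τ • X)⁻¹ *ᵥ (s t - m k₀))))
              else 𝒢 k (s t)))
            - r t - α * q t) ^ 2)
        (((C k₀)⁻¹ * G * (C k₀)⁻¹ * X).trace) 0 := by
  have hA : IsUnit (C k₀) := (hC k₀).2.isUnit
  constructor
  · subst hG
    simp only [Matrix.IsSymm, Matrix.transpose_smul, Matrix.transpose_sum,
      Matrix.transpose_vecMulVec]
  · intro X _
    have hq := fun t => (aux_hasDerivAt_quad (C k₀) X hA (s t - m k₀)).neg.exp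
    have hk : ∀ t, HasDerivAt (fun τ : ℝ => ∑ k, ξ k (a t) *
              (if k = k₀ then
                Real.exp (-((s t - m k₀) ⬝ᵥ ((C k₀ + τ • X)⁻¹ *ᵥ (s t - m k₀))))
              else 𝒢 k (s t)))
        (∑ k, if k = k₀ then ξ k₀ (a t) * (𝒢 k₀ (s t) *
          ((s t - m k₀) ⬝ᵥ (((C k₀)⁻¹ * X * (C k₀)⁻¹) *ᵥ (s t - m k₀)))) else 0) 0 := by
      intro t
      apply HasDerivAt.fun_sum
      intro k _
      by_cases h : k = k₀
      · subst h
        simp only [if_true]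
        have := (hq t).const_mul (ξ k (a t))
        simpa [h𝒢] using this
      · simp only [h, if_false]
        exact hasDerivAt_const _ _
    have hfin := (HasDerivAt.fun_sum (u := Finset.univ) (fun t _ =>
      ((((hk t).sub_const (r t)).sub_const (α * q t)).fun_pow 2))).const_mul (1 / (T : ℝ))
    refine hfin.congr_deriv ?_
    have hval : ∀ t, (∑ k, ξ k (a t) *
              (if k = k₀ then
                Real.exp (-((s t - m k₀) ⬝ᵥ ((C k₀ + (0 : ℝ) • X)⁻¹ *ᵥ (s t - m k₀))))
              else 𝒢 k (s t))) - r t - α * q t = δ t := by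
      intro t
      rw [hδ]
      congr 2
      apply Finset.sum_congr rfl
      intro k _
      by_cases h : k = k₀
      · subst h; simp [h𝒢]
      · simp [h]
    simp only [hval]
    subst hG
    simp only [Matrix.mul_smul, Matrix.smul_mul, Matrix.mul_sum, Matrix.sum_mul,
      Matrix.trace_smul, Matrix.trace_sum, aux_trace, smul_eq_mul, Finset.mul_sum,
      Finset.sum_ite_eq', Finset.mem_univ, if_true]
    apply Finset.sum_congr rfl
    intro t _
    norm_num
    ring
end

section
/- Let J ∈ ℕ_* and x ∈ ℝ. Then the infimum of Σ_{j=1}^{J} u_j² over all (u_1, …, u_J) ∈ ℝ^J satisfying Π_{j=1}^{J} u_j = x equals J · |x|^{2/J}, and this infimum is attained. -/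
open Finset

/-- For `J ∈ ℕ_*` and `x ∈ ℝ`, the infimum of `∑_{j=1}^J u_j²` over all Hadamard
factorizations `(u_1, …, u_J)` of `x` (i.e. `∏_j u_j = x`) equals `J · |x|^{2/J}`,
and the infimum is attained. -/
theorem isLeast_hadamard_factorization_sq_sum (J : ℕ) (hJ : 0 < J) (x : ℝ) :
    IsLeast {y : ℝ | ∃ u : Fin J → ℝ, (∏ j, u j) = x ∧ y = ∑ j, (u j) ^ 2}
      ((J : ℝ) * |x| ^ ((2 : ℝ) / (J : ℝ))) := by
  have hJ' : (0 : ℝ) < J := by exact_mod_cast hJ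
  constructor
  · have hr : (|x| ^ ((J : ℝ)⁻¹)) ^ J = |x| :=
      Real.rpow_inv_natCast_pow (abs_nonneg x) hJ.ne'
    have hr2 : |x| ^ ((2 : ℝ) / (J : ℝ)) = (|x| ^ ((J : ℝ)⁻¹)) ^ 2 := by
      rw [← Real.rpow_natCast, ← Real.rpow_mul (abs_nonneg x)]
      congr 1
      push_cast
      ring
    rw [hr2]
    generalize |x| ^ ((J : ℝ)⁻¹) = r at hr
    obtain ⟨n, rfl⟩ : ∃ n, J = n + 1 := ⟨J - 1, by omega⟩
    refine ⟨Fin.cons (if x < 0 then -r else r) (fun _ => r), ?_, ?_⟩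
    · rw [Fin.prod_univ_succ]
      simp only [Fin.cons_zero, Fin.cons_succ, prod_const, card_univ, Fintype.card_fin]
      split_ifs with h
      · rw [abs_of_neg h, pow_succ] at hr
        linarith
      · rw [abs_of_nonneg (not_lt.mp h), pow_succ] at hr
        linarith
    · rw [Fin.sum_univ_succ]
      simp only [Fin.cons_zero, Fin.cons_succ, sum_const, card_univ, Fintype.card_fin,
        nsmul_eq_mul]
      push_cast
      split_ifs <;> ring
  · rintro y ⟨u, hu, rfl⟩
    have h := Real.geom_mean_le_arith_mean univ (fun _ : Fin J => (1 : ℝ)) (fun j => u j ^ 2)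
      (fun _ _ => zero_le_one) (by simpa using hJ) (fun _ _ => sq_nonneg _)
    simp only [Real.rpow_one, one_mul, sum_const, card_univ, Fintype.card_fin,
      nsmul_eq_mul, mul_one, prod_pow, hu] at h
    have e : |x| ^ ((2 : ℝ) / (J : ℝ)) = (x ^ 2) ^ ((J : ℝ)⁻¹) := by
      rw [← sq_abs, ← Real.rpow_natCast, ← Real.rpow_mul (abs_nonneg x)]
      congr 1
    rw [e]
    rw [le_div_iff₀ hJ'] at h
    linarith
end

section
/- Let J ∈ ℕ_* and let Ξ be a K × N real matrix. Then the infimum of Σ_{j=1}^{J} ‖Υ_j‖_F² over all tuples (Υ_1, …, Υ_J) of K × N real matrices whose entrywise (Hadamard) product Υ_1 ⊙ ⋯ ⊙ Υ_J equals Ξ is J · Σ_{k=1}^{K} Σ_{a=1}^{N} |Ξ_{k,a}|^{2/J}, i.e., J times the 2/J quasi-norm of Ξ raised to the power 2/J, and this infimum is attained. -/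
open Finset Matrix

attribute [local instance] Matrix.frobeniusNormedAddCommGroup

lemma frob_sq {K N : ℕ} (A : Matrix (Fin K) (Fin N) ℝ) : ‖A‖ ^ 2 = ∑ k, ∑ a, A k a ^ 2 := by
  rw [Matrix.frobenius_norm_def]
  have h0 : 0 ≤ ∑ i, ∑ j, ‖A i j‖ ^ (2 : ℝ) := by positivity
  rw [← Real.sqrt_eq_rpow, Real.sq_sqrt h0]
  simp

lemma scalar_lower {J : ℕ} (hJ : 0 < J) (x : Fin J → ℝ) :
    (J : ℝ) * |∏ j, x j| ^ ((2 : ℝ) / (J : ℝ)) ≤ ∑ j, x j ^ 2 := by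
  have hJ' : (0 : ℝ) < J := by exact_mod_cast hJ
  have h := Real.geom_mean_le_arith_mean Finset.univ (fun _ : Fin J => (1 : ℝ))
    (fun j => x j ^ 2) (by simp) (by simpa using hJ) (fun i _ => sq_nonneg _)
  simp only [Real.rpow_one, Finset.sum_const, Finset.card_univ, Fintype.card_fin, one_mul,
    nsmul_eq_mul, mul_one, Finset.prod_pow] at h
  rw [le_div_iff₀ hJ'] at h
  rw [mul_comm, div_eq_mul_inv, Real.rpow_mul (abs_nonneg _)]
  simpa using h

lemma scalar_exists {J : ℕ} (hJ : 0 < J) (c : ℝ) :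
    ∃ x : Fin J → ℝ, ∏ j, x j = c ∧ ∑ j, x j ^ 2 = (J : ℝ) * |c| ^ ((2 : ℝ) / (J : ℝ)) := by
  have hJ' : (J : ℝ) ≠ 0 := by exact_mod_cast hJ.ne'
  obtain ⟨s, hs, hc⟩ : ∃ s : ℝ, s ^ 2 = 1 ∧ s * |c| = c := by
    rcases le_total 0 c with h | h
    · exact ⟨1, by norm_num, by rw [abs_of_nonneg h]; ring⟩
    · exact ⟨-1, by norm_num, by rw [abs_of_nonpos h]; ring⟩
  refine ⟨fun j => (if j = ⟨0, hJ⟩ then s else 1) * |c| ^ ((1 : ℝ) / J), ?_, ?_⟩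
  · rw [Finset.prod_mul_distrib, Finset.prod_ite_eq' Finset.univ _ (fun _ => s)]
    simp only [Finset.mem_univ, if_true, Finset.prod_const, Finset.card_univ, Fintype.card_fin]
    rw [← Real.rpow_natCast, ← Real.rpow_mul (abs_nonneg _), one_div_mul_cancel hJ',
      Real.rpow_one, hc]
  · have h : ∀ j : Fin J, ((if j = ⟨0, hJ⟩ then s else 1) * |c| ^ ((1 : ℝ) / J)) ^ 2
        = |c| ^ ((2 : ℝ) / (J : ℝ)) := by
      intro j
      rw [mul_pow, ← Real.rpow_natCast (|c| ^ _), ← Real.rpow_mul (abs_nonneg _)]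
      have : (if j = ⟨0, hJ⟩ then s else 1) ^ 2 = 1 := by split_ifs <;> simp [hs]
      rw [this, one_mul]
      congr 1
      push_cast
      ring
    simp only [h]
    simp

lemma sum_frob {J K N : ℕ} (Υ : Fin J → Matrix (Fin K) (Fin N) ℝ) :
    ∑ j, ‖Υ j‖ ^ 2 = ∑ k, ∑ a, ∑ j, Υ j k a ^ 2 := by
  simp only [frob_sq]
  rw [Finset.sum_comm]
  exact Finset.sum_congr rfl fun k _ => Finset.sum_comm

/-- For `J ∈ ℕ_*` and a `K × N` real matrix `Ξ`, the infimum of `∑_{j=1}^J ‖Υ_j‖_F²` over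
all Hadamard overparametrizations `(Υ_1, …, Υ_J)` of `Ξ` (i.e. `Υ_1 ⊙ ⋯ ⊙ Υ_J = Ξ`
entrywise) equals `J · ∑_{k,a} |Ξ_{k,a}|^{2/J} = J · ‖Ξ‖_{2/J}^{2/J}`, and the infimum is
attained.  (Here `‖·‖` is the Frobenius norm on matrices.) -/
theorem isLeast_hadamard_overparametrization_frobeniusSq_sum
    (J K N : ℕ) (hJ : 0 < J) (hK : 0 < K) (hN : 0 < N)
    (Ξ : Matrix (Fin K) (Fin N) ℝ) :
    IsLeast {y : ℝ | ∃ Υ : Fin J → Matrix (Fin K) (Fin N) ℝ,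
        (∀ k a, (∏ j, Υ j k a) = Ξ k a) ∧ y = ∑ j, ‖Υ j‖ ^ 2}
      ((J : ℝ) * ∑ k, ∑ a, |Ξ k a| ^ ((2 : ℝ) / (J : ℝ))) := by
  simp only [Finset.mul_sum]
  constructor
  · choose x hx hx2 using fun k a => scalar_exists hJ (Ξ k a)
    refine ⟨fun j => Matrix.of fun k a => x k a j, fun k a => hx k a, ?_⟩
    refine Eq.trans ?_ (sum_frob _).symm
    exact Finset.sum_congr rfl fun k _ => Finset.sum_congr rfl fun a _ => (hx2 k a).symm
  · rintro y ⟨Υ, hΥ, rfl⟩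
    rw [sum_frob]
    refine Finset.sum_le_sum fun k _ => Finset.sum_le_sum fun a _ => ?_
    rw [← hΥ k a]
    exact scalar_lower hJ fun j => Υ j k a
end
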